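/- (Sawtooth Lemma, large-gap case.) For every t ∈ ℕ and all x, y ≥ 0 with |x − y| ≥ 2^{t−1}, (1/4)·∫₀⁴ ∫₀¹ |g_t(β·x + α·2^{t+1}) − g_t(β·y + α·2^{t+1})| dα dβ ≥ 2^{t+1}/12. -/

import Mathlib

open MeasureTheory

/-- The sawtooth function `g_t(x) = 2^t - |x - (⌊x/2^{t+1}⌋·2^{t+1} + 2^t)|`. -/
noncomputable def sawtooth (t : ℕ) (x : ℝ) : ℝ :=
  2 ^ t - |x - ((⌊x / 2 ^ (t + 1)⌋ : ℝ) * 2 ^ (t + 1) + 2 ^ t)|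

/-!
The sawtooth `g_t` is the distance to the nearest multiple of the period `p = 2 ^ (t + 1)`, i.e. the
norm on the circle `ℝ / pℤ`. On a circle `|‖u‖ - ‖v‖| = min ‖u - v‖ ‖u + v‖`, so translating both
points by `s` changes only the second term, to `‖u + v + 2s‖`, and the integral over a period in `s`
is `p‖u - v‖ - ‖u - v‖ ^ 2`. With `u - v = β(x - y)` this is periodic in `β`, with mean `p ^ 2 / 6`;
as soon as `β(x - y)` covers at least one full period, a nonnegative periodic integrand retains at
least half of its mean, because `⌊r⌋ ≥ r / 2` for `r ≥ 1`.
-/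

lemma integral_comp_intCast_mul_add_of_periodic {E : Type*} [NormedAddCommGroup E] [NormedSpace ℝ E]
    {f : ℝ → E} {T : ℝ} (hf : Function.Periodic f T)
    (hfi : ∀ a b, IntervalIntegrable f volume a b) {n : ℤ} (hn : n ≠ 0) (c : ℝ) :
    ∫ x in 0..T, f (n * x + c) = ∫ x in 0..T, f x := by
  have hn' : (n : ℝ) ≠ 0 := Int.cast_ne_zero.mpr hn
  have hperiods : ∫ x in c..c + n • T, f x = n • ∫ x in 0..T, f x := by
    rw [hf.intervalIntegral_add_zsmul_eq n c hfi, hf.intervalIntegral_add_eq c 0, zero_add]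
  rw [intervalIntegral.integral_comp_mul_add f hn', mul_zero, zero_add, add_comm _ c,
    ← zsmul_eq_mul, hperiods, ← Int.cast_smul_eq_zsmul ℝ, inv_smul_smul₀ hn']

lemma mul_integral_period_le_two_mul_mul_integral {f : ℝ → ℝ} {T L : ℝ}
    (hf : Function.Periodic f T) (hfi : ∀ a b, IntervalIntegrable f volume a b)
    (hnonneg : ∀ x, 0 ≤ f x) (hT : 0 < T) (hL : T ≤ L) :
    L * ∫ x in 0..T, f x ≤ 2 * T * ∫ x in 0..L, f x := by
  have hone : (1 : ℝ) ≤ ⌊L / T⌋ := by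
    exact_mod_cast Int.le_floor.mpr (by simpa using (one_le_div hT).mpr hL)
  have hhalf : L ≤ 2 * T * ⌊L / T⌋ := by
    have hlt : L < (⌊L / T⌋ + 1) * T := (div_lt_iff₀ hT).mp (Int.lt_floor_add_one _)
    nlinarith
  have hfloor : ⌊L / T⌋ * T ≤ L := (le_div_iff₀ hT).mp (Int.floor_le _)
  have hperiods : ∫ x in 0..⌊L / T⌋ * T, f x = ⌊L / T⌋ * ∫ x in 0..T, f x := by
    simpa using hf.intervalIntegral_add_zsmul_eq ⌊L / T⌋ 0 hfi
  calc L * ∫ x in 0..T, f x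
      ≤ 2 * T * ⌊L / T⌋ * ∫ x in 0..T, f x := by
        gcongr
        exact intervalIntegral.integral_nonneg hT.le fun x _ ↦ hnonneg x
    _ = 2 * T * ∫ x in 0..⌊L / T⌋ * T, f x := by rw [hperiods, mul_assoc]
    _ ≤ 2 * T * ∫ x in 0..L, f x := by
        gcongr
        exact intervalIntegral.integral_mono_interval le_rfl (by positivity) hfloor
          (.of_forall hnonneg) (hfi 0 L)

lemma integral_min_const_id {m L : ℝ} (hm : 0 ≤ m) (hmL : m ≤ L) :
    ∫ r in 0..L, min m r = m * L - m ^ 2 / 2 := by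
  have hfi (a b : ℝ) : IntervalIntegrable (fun r ↦ min m r) volume a b :=
    (continuous_const.min continuous_id).intervalIntegrable a b
  have hlow : ∫ r in 0..m, min m r = ∫ r in 0..m, r :=
    intervalIntegral.integral_congr fun _ hr ↦
      min_eq_right (Set.uIcc_of_le hm ▸ hr).2
  have hhigh : ∫ r in m..L, min m r = ∫ _ in m..L, m :=
    intervalIntegral.integral_congr fun _ hr ↦
      min_eq_left (Set.uIcc_of_le hmL ▸ hr).1
  rw [← intervalIntegral.integral_add_adjacent_intervals (hfi 0 m) (hfi m L), hlow, hhigh,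
    integral_id, intervalIntegral.integral_const, smul_eq_mul]
  ring

section Circle

variable {p : ℝ}

lemma exists_coe_eq_and_abs_eq_norm (u : AddCircle p) :
    ∃ a : ℝ, (a : AddCircle p) = u ∧ |a| = ‖u‖ := by
  induction u using QuotientAddGroup.induction_on with
  | H a =>
    refine ⟨a - round (p⁻¹ * a) * p, ?_, (AddCircle.norm_eq p).symm⟩
    rw [← zsmul_eq_mul, AddCircle.coe_sub, AddCircle.coe_zsmul, AddCircle.coe_period, smul_zero,
      sub_zero]

lemma norm_le_half_of_pos (hp : 0 < p) (u : AddCircle p) : ‖u‖ ≤ p / 2 := by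
  simpa only [abs_of_pos hp] using AddCircle.norm_le_half_period p hp.ne'

lemma abs_norm_sub_norm_eq_min (u v : AddCircle p) :
    |‖u‖ - ‖v‖| = min ‖u - v‖ ‖u + v‖ := by
  apply le_antisymm
  · exact le_min (abs_norm_sub_norm_le u v) (by simpa using abs_norm_sub_norm_le u (-v))
  · obtain ⟨a, rfl, ha⟩ := exists_coe_eq_and_abs_eq_norm u
    obtain ⟨b, rfl, hb⟩ := exists_coe_eq_and_abs_eq_norm v
    have hsub : ‖(a - b : AddCircle p)‖ ≤ |a - b| := QuotientAddGroup.norm_mk_le_norm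
    have hadd : ‖(a + b : AddCircle p)‖ ≤ |a + b| := QuotientAddGroup.norm_mk_le_norm
    have hsigns : |a - b| = |(|a| - |b|)| ∨ |a + b| = |(|a| - |b|)| := by
      grind
    rw [← ha, ← hb, min_le_iff]
    exact hsigns.imp hsub.trans_eq hadd.trans_eq

lemma norm_coe_mul_abs (r s : ℝ) :
    ‖((r * |s| : ℝ) : AddCircle p)‖ = ‖((r * s : ℝ) : AddCircle p)‖ := by
  obtain h | h := abs_choice s <;> simp [h]

lemma periodic_comp_norm_coe {α : Type*} (f : ℝ → α) :
    Function.Periodic (fun x : ℝ ↦ f ‖(x : AddCircle p)‖) p := fun x ↦ by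
  simp only [AddCircle.coe_add_period]

lemma intervalIntegrable_comp_norm_coe {E : Type*} [NormedAddCommGroup E] {f : ℝ → E}
    (hf : Continuous f) (a b : ℝ) :
    IntervalIntegrable (fun x : ℝ ↦ f ‖(x : AddCircle p)‖) volume a b :=
  (hf.comp (AddCircle.continuous_mk' p).norm).intervalIntegrable a b

lemma integral_comp_norm_coe {E : Type*} [NormedAddCommGroup E] [NormedSpace ℝ E]
    (hp : 0 < p) {f : ℝ → E} (hf : Continuous f) :
    ∫ x in 0..p, f ‖(x : AddCircle p)‖ = (2 : ℝ) • ∫ r in 0..p / 2, f r := by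
  have hfi := intervalIntegrable_comp_norm_coe (p := p) hf
  have hright : ∫ x in 0..p / 2, f ‖(x : AddCircle p)‖ = ∫ r in 0..p / 2, f r := by
    refine intervalIntegral.integral_congr fun x hx ↦ ?_
    rw [Set.uIcc_of_le (by positivity)] at hx
    have hnorm : ‖(x : AddCircle p)‖ = |x| := by
      rw [AddCircle.norm_coe_eq_abs_iff p hp.ne', abs_of_nonneg hx.1, abs_of_pos hp]
      exact hx.2
    simp only [hnorm, abs_of_nonneg hx.1]
  have hleft : ∫ x in -(p / 2)..0, f ‖(x : AddCircle p)‖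
      = ∫ x in 0..p / 2, f ‖(x : AddCircle p)‖ := by
    simpa using
      (intervalIntegral.integral_comp_neg (a := 0) (b := p / 2)
        fun x : ℝ ↦ f ‖(x : AddCircle p)‖).symm
  calc ∫ x in 0..p, f ‖(x : AddCircle p)‖
      = ∫ x in -(p / 2)..p / 2, f ‖(x : AddCircle p)‖ := by
        have h := (periodic_comp_norm_coe (p := p) f).intervalIntegral_add_eq 0 (-(p / 2))
        rwa [zero_add, show -(p / 2) + p = p / 2 by ring] at h
    _ = (2 : ℝ) • ∫ r in 0..p / 2, f r := by
        rw [← intervalIntegral.integral_add_adjacent_intervals (hfi _ 0) (hfi 0 _), hleft,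
          hright, two_smul]

lemma integral_abs_norm_add_coe_sub_norm_add_coe (hp : 0 < p) (u v : AddCircle p) :
    ∫ s in 0..p, |‖u + (s : AddCircle p)‖ - ‖v + (s : AddCircle p)‖|
      = p * ‖u - v‖ - ‖u - v‖ ^ 2 := by
  obtain ⟨c, hc, -⟩ := exists_coe_eq_and_abs_eq_norm (u + v)
  have hmin : Continuous (min ‖u - v‖) := continuous_const.min continuous_id
  have hpointwise (s : ℝ) : |‖u + (s : AddCircle p)‖ - ‖v + (s : AddCircle p)‖|
      = min ‖u - v‖ ‖(((2 : ℤ) * s + c : ℝ) : AddCircle p)‖ := by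
    rw [abs_norm_sub_norm_eq_min, add_sub_add_right_eq_sub, AddCircle.coe_add, hc, Int.cast_two,
      two_mul, AddCircle.coe_add]
    congr 2
    abel
  calc ∫ s in 0..p, |‖u + (s : AddCircle p)‖ - ‖v + (s : AddCircle p)‖|
      = ∫ s in 0..p, min ‖u - v‖ ‖(((2 : ℤ) * s + c : ℝ) : AddCircle p)‖ := by
        simp only [hpointwise]
    _ = ∫ w in 0..p, min ‖u - v‖ ‖(w : AddCircle p)‖ :=
        integral_comp_intCast_mul_add_of_periodic (periodic_comp_norm_coe _)
          (intervalIntegrable_comp_norm_coe hmin) two_ne_zero c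
    _ = p * ‖u - v‖ - ‖u - v‖ ^ 2 := by
        rw [integral_comp_norm_coe hp hmin, smul_eq_mul,
          integral_min_const_id (norm_nonneg _) (norm_le_half_of_pos hp _)]
        ring

lemma integral_mul_norm_coe_sub_sq (hp : 0 < p) :
    ∫ w in 0..p, (p * ‖(w : AddCircle p)‖ - ‖(w : AddCircle p)‖ ^ 2) = p ^ 3 / 6 := by
  rw [integral_comp_norm_coe hp (f := fun r ↦ p * r - r ^ 2) (by fun_prop),
    intervalIntegral.integral_sub (Continuous.intervalIntegrable (by fun_prop) _ _) (by simp),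
    intervalIntegral.integral_const_mul, integral_id, integral_pow, smul_eq_mul]
  ring

lemma le_integral_mul_norm_coe_sub_sq (hp : 0 < p) {B d : ℝ} (hd : 0 < d) (hBd : p ≤ B * d) :
    B * p ^ 2 / 12 ≤ ∫ β in 0..B,
      (p * ‖((β * d : ℝ) : AddCircle p)‖ - ‖((β * d : ℝ) : AddCircle p)‖ ^ 2) := by
  have hnonneg (w : ℝ) : 0 ≤ p * ‖(w : AddCircle p)‖ - ‖(w : AddCircle p)‖ ^ 2 := by
    nlinarith [norm_nonneg (w : AddCircle p), norm_le_half_of_pos hp (w : AddCircle p)]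
  have hmean := mul_integral_period_le_two_mul_mul_integral
    (periodic_comp_norm_coe fun r ↦ p * r - r ^ 2)
    (intervalIntegrable_comp_norm_coe (f := fun r ↦ p * r - r ^ 2) (by fun_prop)) hnonneg hp hBd
  rw [integral_mul_norm_coe_sub_sq hp] at hmean
  rw [intervalIntegral.integral_comp_mul_right
      (fun w ↦ p * ‖(w : AddCircle p)‖ - ‖(w : AddCircle p)‖ ^ 2) hd.ne',
    zero_mul, smul_eq_mul, ← div_eq_inv_mul, le_div_iff₀ hd]
  refine le_of_mul_le_mul_left ?_ (show 0 < 2 * p by positivity)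
  linarith

lemma integral_abs_norm_coe_add_mul_sub (hp : 0 < p) (a b : ℝ) :
    ∫ α in (0 : ℝ)..1, |‖((a + α * p : ℝ) : AddCircle p)‖ - ‖((b + α * p : ℝ) : AddCircle p)‖|
      = p⁻¹ * (p * ‖((a - b : ℝ) : AddCircle p)‖ - ‖((a - b : ℝ) : AddCircle p)‖ ^ 2) := by
  rw [intervalIntegral.integral_comp_mul_right
      (fun s ↦ |‖((a + s : ℝ) : AddCircle p)‖ - ‖((b + s : ℝ) : AddCircle p)‖|) hp.ne',
    zero_mul, one_mul, smul_eq_mul]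
  simp only [AddCircle.coe_add, AddCircle.coe_sub, integral_abs_norm_add_coe_sub_norm_add_coe hp]

end Circle

lemma sawtooth_eq_norm_coe (t : ℕ) (x : ℝ) :
    sawtooth t x = ‖(x : AddCircle ((2 : ℝ) ^ (t + 1)))‖ := by
  have hp : (0 : ℝ) < 2 ^ (t + 1) := by positivity
  have hhalf : (2 : ℝ) ^ t = 2 ^ (t + 1) / 2 := by ring
  rw [AddCircle.norm_eq' _ hp, abs_sub_round_eq_min, ← div_eq_inv_mul, sawtooth, hhalf]
  generalize (2 : ℝ) ^ (t + 1) = p at hp ⊢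
  have hoffset : x - (⌊x / p⌋ * p + p / 2) = p * (Int.fract (x / p) - 1 / 2) := by
    rw [Int.fract]
    field_simp
    ring
  rw [hoffset, abs_mul, abs_of_pos hp]
  rcases le_total (Int.fract (x / p)) (1 / 2) with h | h
  · rw [abs_of_nonpos (by linarith), min_eq_left (by linarith)]
    ring
  · rw [abs_of_nonneg (by linarith), min_eq_right (by linarith)]
    ring

theorem sawtooth_expected_gap_large_general (t : ℕ) {x y B : ℝ}
    (hxy : 2 ^ (t + 1) ≤ B * |x - y|) :
    2 ^ (t + 1) / 12 ≤
      (1 / B) * ∫ β in (0 : ℝ)..B, ∫ α in (0 : ℝ)..1,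
        |sawtooth t (β * x + α * 2 ^ (t + 1)) - sawtooth t (β * y + α * 2 ^ (t + 1))| := by
  have hp : (0 : ℝ) < 2 ^ (t + 1) := by positivity
  have hB : 0 < B := pos_of_mul_pos_left (hp.trans_le hxy) (abs_nonneg _)
  have hd : 0 < |x - y| := pos_of_mul_pos_right (hp.trans_le hxy) hB.le
  have hmean := le_integral_mul_norm_coe_sub_sq hp hd hxy
  simp only [sawtooth_eq_norm_coe, integral_abs_norm_coe_add_mul_sub hp, ← mul_sub]
  simp only [norm_coe_mul_abs] at hmean
  rw [intervalIntegral.integral_const_mul]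
  calc (2 : ℝ) ^ (t + 1) / 12
      = 1 / B * ((2 ^ (t + 1))⁻¹ * (B * (2 ^ (t + 1)) ^ 2 / 12)) := by field_simp
    _ ≤ _ := by gcongr

/-- Sawtooth Lemma, large-gap case: if `|x - y| ≥ 2^{t-1}` then
`E_{α,β}[|g_{t,α,β}(x) - g_{t,α,β}(y)|] ≥ 2^{t+1}/12`. -/
theorem sawtooth_expected_gap_large (t : ℕ) (x y : ℝ) (hx : 0 ≤ x) (hy : 0 ≤ y)
    (hxy : 2 ^ t / 2 ≤ |x - y|) :
    2 ^ (t + 1) / 12 ≤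
      (1 / 4) * ∫ β in (0:ℝ)..4, ∫ α in (0:ℝ)..1,
        |sawtooth t (β * x + α * 2 ^ (t + 1)) - sawtooth t (β * y + α * 2 ^ (t + 1))| := by
  apply sawtooth_expected_gap_large_general
  linarith [pow_succ (2 : ℝ) t]
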